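/- (Pointwise energy-dissipation inequality for the standard linear FrBD_{n+1}-GKV model; core of Lemma 5.2.) Let Ω ⊆ ℝ³ be open (with coordinates (x, y, s)), let ε ≥ 0, let v̄ : Ω → ℝ² be a function, V_r : ℝ → ℝ with V_r(s) > 0, and let z, z_1, …, z_n : Ω → ℝ² be differentiable functions satisfying the standard linear FrBD_{n+1}-GKV equations at every point of Ω. Define z₀ := z − Σ_{i=1}^n z_i, the energy density q := ½ z₀ᵀ K₀ z₀ + ½ Σ_{i=1}^n z_iᵀ K_i z_i, and the total force f := K₀ z₀. Then at every point of Ω one has ∂q/∂s − ∂q/∂x ≤ −fᵀ v̄. -/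

import Mathlib

open Matrix

/-- The regularised Euclidean norm `‖y‖_{2,ε} = √(‖y‖₂² + ε)` on `ℝ²`. -/
noncomputable def regNorm (ε : ℝ) (y : Fin 2 → ℝ) : ℝ := Real.sqrt (y ⬝ᵥ y + ε)

theorem quad_hasDerivAt (A : Matrix (Fin 2) (Fin 2) ℝ) (hA : A.PosDef)
    (u : ℝ → Fin 2 → ℝ) (u' : Fin 2 → ℝ) (t : ℝ) (hu : HasDerivAt u u' t) :
    HasDerivAt (fun r => u r ⬝ᵥ A.mulVec (u r)) (2 * (A.mulVec (u t) ⬝ᵥ u')) t := by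
  have h := hasDerivAt_pi.1 hu
  have h0 := h 0
  have h1 := h 1
  have hs : A 1 0 = A 0 1 := by
    have := hA.isHermitian.apply 0 1
    simpa using this
  simp only [dotProduct, mulVec, Fin.sum_univ_two]
  have := (h0.mul ((h0.const_mul (A 0 0)).add (h1.const_mul (A 0 1)))).add
    (h1.mul ((h0.const_mul (A 1 0)).add (h1.const_mul (A 1 1))))
  refine HasDerivAt.congr_deriv this ?_
  simp only [Pi.add_apply]
  rw [hs]
  ring

theorem energy_hasDerivAt {n : ℕ} (K₀ : Matrix (Fin 2) (Fin 2) ℝ)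
    (K : Fin n → Matrix (Fin 2) (Fin 2) ℝ) (hK₀ : K₀.PosDef) (hK : ∀ i, (K i).PosDef)
    (z : ℝ → Fin 2 → ℝ) (zi : Fin n → ℝ → Fin 2 → ℝ) (z' : Fin 2 → ℝ) (zi' : Fin n → Fin 2 → ℝ)
    (t : ℝ) (hz : HasDerivAt z z' t) (hzi : ∀ i, HasDerivAt (zi i) (zi' i) t) :
    HasDerivAt (fun r => (1/2) * ((z r - ∑ i, zi i r) ⬝ᵥ K₀.mulVec (z r - ∑ i, zi i r)) +
          (1/2) * ∑ i, zi i r ⬝ᵥ (K i).mulVec (zi i r))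
      (K₀.mulVec (z t - ∑ i, zi i t) ⬝ᵥ (z' - ∑ i, zi' i) +
        ∑ i, (K i).mulVec (zi i t) ⬝ᵥ zi' i) t := by
  have h1 : HasDerivAt (fun r => z r - ∑ i, zi i r) (z' - ∑ i, zi' i) t :=
    hz.fun_sub (HasDerivAt.fun_sum fun i _ => hzi i)
  have h2 := quad_hasDerivAt K₀ hK₀ _ _ t h1
  have h3 := HasDerivAt.fun_sum (u := Finset.univ)
    fun i _ => quad_hasDerivAt (K i) (hK i) _ _ t (hzi i)
  refine HasDerivAt.congr_deriv ((h2.const_mul (1/2)).fun_add (h3.const_mul (1/2))) ?_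
  rw [← Finset.mul_sum]
  ring

theorem posDef_inv_nonneg (A : Matrix (Fin 2) (Fin 2) ℝ) (hA : A.PosDef) (v : Fin 2 → ℝ) :
    0 ≤ v ⬝ᵥ A⁻¹.mulVec v := by
  simpa using hA.inv.posSemidef.dotProduct_mulVec_nonneg v

theorem sq_inv_nonneg (A : Matrix (Fin 2) (Fin 2) ℝ) (hA : A.PosDef) (v : Fin 2 → ℝ) :
    0 ≤ v ⬝ᵥ (A * A)⁻¹.mulVec v := by
  have h : (A⁻¹)ᵀ = A⁻¹ := by simpa using hA.inv.isHermitian.eq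
  rw [Matrix.mul_inv_rev, ← Matrix.mulVec_mulVec, Matrix.dotProduct_mulVec,
    ← Matrix.mulVec_transpose, h]
  simpa using dotProduct_star_self_nonneg (A⁻¹.mulVec v)

/-- Pointwise energy-dissipation inequality for the standard linear FrBD_{n+1}-GKV model
(core of Lemma 5.2): along `D = ∂/∂s − ∂/∂x`, the energy density
`q = ½ z₀ᵀK₀z₀ + ½ Σᵢ zᵢᵀKᵢzᵢ` (with `z₀ = z − Σᵢ zᵢ`) satisfies
`∂q/∂s − ∂q/∂x ≤ −fᵀ v̄` at every point of `Ω`, where `f = K₀ z₀`. -/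
theorem frbd_gkv_pointwise_dissipation (n : ℕ)
    (K₀ : Matrix (Fin 2) (Fin 2) ℝ) (K C : Fin n → Matrix (Fin 2) (Fin 2) ℝ)
    (hK₀ : K₀.PosDef) (hK : ∀ i, (K i).PosDef) (hC : ∀ i, (C i).PosDef)
    (Mm : (Fin 2 → ℝ) → Matrix (Fin 2) (Fin 2) ℝ) (hMm : ∀ y, (Mm y).PosDef)
    (ε : ℝ) (hε : 0 ≤ ε)
    (Ω : Set (ℝ × ℝ × ℝ)) (hΩ : IsOpen Ω)
    (vb : ℝ → ℝ → ℝ → (Fin 2 → ℝ))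
    (Vr : ℝ → ℝ) (hVr : ∀ s, 0 < Vr s)
    (z : ℝ → ℝ → ℝ → (Fin 2 → ℝ)) (zi : Fin n → ℝ → ℝ → ℝ → (Fin 2 → ℝ))
    (zx zs : ℝ → ℝ → ℝ → (Fin 2 → ℝ)) (zix zis : Fin n → ℝ → ℝ → ℝ → (Fin 2 → ℝ))
    -- partial derivatives of the states
    (hzx : ∀ x y s, (x, y, s) ∈ Ω → HasDerivAt (fun x' => z x' y s) (zx x y s) x)
    (hzs : ∀ x y s, (x, y, s) ∈ Ω → HasDerivAt (fun s' => z x y s') (zs x y s) s)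
    (hzix : ∀ i x y s, (x, y, s) ∈ Ω → HasDerivAt (fun x' => zi i x' y s) (zix i x y s) x)
    (hzis : ∀ i x y s, (x, y, s) ∈ Ω → HasDerivAt (fun s' => zi i x y s') (zis i x y s) s)
    -- the standard linear FrBD_{n+1}-GKV equations: D z = Ψ K₀ z₀ − v̄
    (hPDEz : ∀ x y s, (x, y, s) ∈ Ω →
      zs x y s - zx x y s =
        -(((Vr s)⁻¹ *
            regNorm ε ((Mm (Vr s • vb x y s)).mulVec (Vr s • vb x y s))) •
          ((Mm (Vr s • vb x y s) * Mm (Vr s • vb x y s))⁻¹.mulVec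
            (K₀.mulVec (z x y s - ∑ i, zi i x y s)))) - vb x y s)
    -- and D zᵢ = (1/V_r) Cᵢ⁻¹ (K₀ z₀ − Kᵢ zᵢ)
    (hPDEzi : ∀ i x y s, (x, y, s) ∈ Ω →
      zis i x y s - zix i x y s =
        (Vr s)⁻¹ • ((C i)⁻¹.mulVec
          (K₀.mulVec (z x y s - ∑ j, zi j x y s) - (K i).mulVec (zi i x y s)))) :
    ∀ x y s, (x, y, s) ∈ Ω →
      ∃ qx qs : ℝ,
        HasDerivAt (fun x' =>
          (1/2) * ((z x' y s - ∑ i, zi i x' y s) ⬝ᵥ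
            K₀.mulVec (z x' y s - ∑ i, zi i x' y s)) +
          (1/2) * ∑ i, zi i x' y s ⬝ᵥ (K i).mulVec (zi i x' y s)) qx x ∧
        HasDerivAt (fun s' =>
          (1/2) * ((z x y s' - ∑ i, zi i x y s') ⬝ᵥ
            K₀.mulVec (z x y s' - ∑ i, zi i x y s')) +
          (1/2) * ∑ i, zi i x y s' ⬝ᵥ (K i).mulVec (zi i x y s')) qs s ∧
        qs - qx ≤
          -(K₀.mulVec (z x y s - ∑ i, zi i x y s) ⬝ᵥ vb x y s) := by
  intro x y s hm
  refine ⟨_, _, energy_hasDerivAt K₀ K hK₀ hK (fun x' => z x' y s) (fun i x' => zi i x' y s)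
      (zx x y s) (fun i => zix i x y s) x (hzx x y s hm) (fun i => hzix i x y s hm),
    energy_hasDerivAt K₀ K hK₀ hK (fun s' => z x y s') (fun i s' => zi i x y s')
      (zs x y s) (fun i => zis i x y s) s (hzs x y s hm) (fun i => hzis i x y s hm), ?_⟩
  have e1 := hPDEz x y s hm
  have e2 := fun i => hPDEzi i x y s hm
  beta_reduce
  set f := K₀.mulVec (z x y s - ∑ i, zi i x y s) with hf
  have hV : 0 ≤ (Vr s)⁻¹ := (inv_pos.2 (hVr s)).le
  have a1 : f ⬝ᵥ (zs x y s - zx x y s) ≤ -(f ⬝ᵥ vb x y s) := by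
    rw [e1, dotProduct_sub, dotProduct_neg, dotProduct_smul, smul_eq_mul]
    have hr : 0 ≤ regNorm ε ((Mm (Vr s • vb x y s)).mulVec (Vr s • vb x y s)) :=
      Real.sqrt_nonneg _
    have := mul_nonneg (mul_nonneg hV hr)
      (sq_inv_nonneg _ (hMm (Vr s • vb x y s)) f)
    linarith
  have a2 : 0 ≤ ∑ i, (f - (K i).mulVec (zi i x y s)) ⬝ᵥ (zis i x y s - zix i x y s) := by
    refine Finset.sum_nonneg fun i _ => ?_
    rw [e2 i, dotProduct_smul, smul_eq_mul]
    exact mul_nonneg hV (posDef_inv_nonneg _ (hC i) _)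
  simp only [sub_dotProduct, dotProduct_sub, dotProduct_sum, Finset.sum_sub_distrib] at a1 a2 ⊢
  linarith
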